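/- For all p, q ∈ Δ with V₁(p) < 1/2: V₁(p) ≥ V₁(q) if and only if V₂′(p) ≥ V₂′(q), and V₂(p) ≥ V₂(q) if and only if V₁′(p) ≥ V₁′(q). -/

import Mathlib

/-!
The indifference curves `V₁ = 1/2` and `V₂ = 1/2` coincide: on the simplex both `1/2 ≤ V₁ p` and
`1/2 ≤ V₂ p` say `p.1 ≤ p.2`. So below this common curve `V₂′` agrees with `V₁` and `V₁′` with `V₂`,
while on or above it all four functions are at least `1/2`. If `V₁ p < 1/2`, a lottery `q` below
the curve is compared with `p` by identical values, and any other `q` is strictly better than `p`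
under all four functions.
-/

/-- The set of lotteries over three prizes, identified with points of `ℝ × ℝ`. -/
def Lott : Set (ℝ × ℝ) := {p | 0 ≤ p.1 ∧ 0 ≤ p.2 ∧ p.1 + p.2 ≤ 1}

/-- The weighted utility function `V₁`. -/
noncomputable def V1 (p : ℝ × ℝ) : ℝ :=
  (p.2 + (1 - p.1 - p.2) / 4) / (p.1 + p.2 + (1 - p.1 - p.2) / 2)

/-- The weighted utility function `V₂`. -/
noncomputable def V2 (p : ℝ × ℝ) : ℝ :=
  (p.2 + (1 - p.1 - p.2)) / (p.1 + p.2 + 2 * (1 - p.1 - p.2))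

/-- The non-expected utility function `V₁′`. -/
noncomputable def V1' (p : ℝ × ℝ) : ℝ := if (1 / 2 : ℝ) ≤ V1 p then V1 p else V2 p

/-- The non-expected utility function `V₂′`. -/
noncomputable def V2' (p : ℝ × ℝ) : ℝ := if (1 / 2 : ℝ) ≤ V2 p then V2 p else V1 p

theorem half_le_V1_iff {p : ℝ × ℝ} (hp : p ∈ Lott) : 1 / 2 ≤ V1 p ↔ p.1 ≤ p.2 := by
  obtain ⟨h1, h2, h3⟩ := hp
  rw [V1, le_div_iff₀ (by linarith)]
  constructor <;> intro h <;> linarith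

theorem half_le_V2_iff {p : ℝ × ℝ} (hp : p ∈ Lott) : 1 / 2 ≤ V2 p ↔ p.1 ≤ p.2 := by
  obtain ⟨h1, h2, h3⟩ := hp
  rw [V2, le_div_iff₀ (by linarith)]
  constructor <;> intro h <;> linarith

theorem stmt_5 :
    ∀ p ∈ Lott, ∀ q ∈ Lott, V1 p < (1 / 2 : ℝ) →
      ((V1 q ≤ V1 p ↔ V2' q ≤ V2' p) ∧ (V2 q ≤ V2 p ↔ V1' q ≤ V1' p)) := by
  intro p hp q hq h
  have hV1p : ¬ 1 / 2 ≤ V1 p := not_le.mpr h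
  have hV2p : ¬ 1 / 2 ≤ V2 p := by rwa [half_le_V2_iff hp, ← half_le_V1_iff hp]
  have hq12 : 1 / 2 ≤ V1 q ↔ 1 / 2 ≤ V2 q := by rw [half_le_V1_iff hq, half_le_V2_iff hq]
  rw [V1', V1', V2', V2', if_neg hV1p, if_neg hV2p]
  by_cases hV1q : 1 / 2 ≤ V1 q
  · have hV2q := hq12.mp hV1q
    rw [if_pos hV1q, if_pos hV2q]
    constructor <;> constructor <;> intro <;> linarith
  · rw [if_neg hV1q, if_neg (mt hq12.mpr hV1q)]
    exact ⟨Iff.rfl, Iff.rfl⟩
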